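/- Let π = πₙ be a uniformly distributed random permutation of {1,…,n} and define b_{n0} = (1/(n²h₁)) Σ_{i=1}^n a_{ii} B_{π(i)π(i)}. Then E[b_{n0}] = (1/(n²h₁²)) (Σ_{i=1}^n ∫₀¹ K²((u − i/n)/h₁) du) ((1/n) Σ_{i=1}^n ∫₀¹ K̄²((v − i/n)/h₂) dv), and there exists a constant c > 0 depending only on K such that Var(b_{n0}) ≤ c/(n³h₁²) for all n ≥ 2 and all h₁, h₂ ∈ (0,1). -/

import Mathlib

open Finset MeasureTheory Filter ProbabilityTheory

/-- The cumulative distribution function `K̄(x) = ∫_{-∞}^x K(t) dt` of the kernel `K`. -/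
noncomputable def kbar (K : ℝ → ℝ) (x : ℝ) : ℝ := ∫ t in Set.Iic x, K t

/-- `a_{ij} = (1/h₁) ∫₀¹ K((u - i/n)/h₁) K((u - j/n)/h₁) du` (indices `1 ≤ i, j ≤ n`). -/
noncomputable def aCoef (K : ℝ → ℝ) (n : ℕ) (h₁ : ℝ) (i j : ℕ) : ℝ :=
  (1 / h₁) * ∫ u in (0:ℝ)..1, K ((u - i / n) / h₁) * K ((u - j / n) / h₁)

/-- `B_{ij} = ∫₀¹ K̄((v - i/n)/h₂) K̄((v - j/n)/h₂) dv` (indices `1 ≤ i, j ≤ n`). -/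
noncomputable def BCoef (K : ℝ → ℝ) (n : ℕ) (h₂ : ℝ) (i j : ℕ) : ℝ :=
  ∫ v in (0:ℝ)..1, kbar K ((v - i / n) / h₂) * kbar K ((v - j / n) / h₂)

/-- `b̄_i = (1/(n-1)) ∑_{k ≠ i} B_{ik}`. -/
noncomputable def bbar (K : ℝ → ℝ) (n : ℕ) (h₂ : ℝ) (i : ℕ) : ℝ :=
  (1 / ((n : ℝ) - 1)) * ∑ k ∈ Finset.Icc 1 n, if k ≠ i then BCoef K n h₂ i k else 0

/-- `L_i = ∑_{j ≠ i} a_{ij}`. -/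
noncomputable def LL (K : ℝ → ℝ) (n : ℕ) (h₁ : ℝ) (i : ℕ) : ℝ :=
  ∑ j ∈ Finset.Icc 1 n, if j ≠ i then aCoef K n h₁ i j else 0

/-- `σ₀² = (2/45) ∫₀¹ (1 - ∫_{-t}^1 K(v) K̄(v+t) dv)² dt`. -/
noncomputable def sigma0sq (K : ℝ → ℝ) : ℝ :=
  (2 / 45) * ∫ t in (0:ℝ)..1, (1 - ∫ v in (-t)..(1:ℝ), K v * kbar K (v + t)) ^ 2

/-- Expectation with respect to a uniformly distributed random permutation of `{1, …, n}`. -/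
noncomputable def permE (n : ℕ) (f : Equiv.Perm (Fin n) → ℝ) : ℝ :=
  (∑ π : Equiv.Perm (Fin n), f π) / (Nat.factorial n)

/-!
The statistic `b_{n0}` has the form `∑ᵢ aᵢ b_{π(i)}`. Double transitivity of the symmetric group
forces the scores `b_{π(i)}` to be equicorrelated, which gives Hoeffding's formula
`(n - 1) Var (∑ᵢ aᵢ b_{π(i)}) = n² Var a · Var b`, with `Var a` and `Var b` taken over a uniform
index. A change of variables cancels the factor `1/h₁` in `a_{ii}`, so that
`|a_{ii}| ≤ ∫ K²`, while `|B_{jj}| ≤ (∫ |K|)²`; these bounds control the two variances.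
-/

open scoped BigOperators

section Group

variable {G α M : Type*} [Group G] [Fintype G] [MulAction G α] [AddCommMonoid M] [Module ℚ≥0 M]

lemma expect_smul_smul (f : α → M) (h : G) (x : α) : 𝔼 g : G, f (g • h • x) = 𝔼 g : G, f (g • x) :=
  Fintype.expect_equiv (Equiv.mulRight h) _ _ fun g => by rw [Equiv.coe_mulRight, mul_smul]

lemma expect_smul_of_isPretransitive [Fintype α] [MulAction.IsPretransitive G α] (f : α → M)
    (x : α) : 𝔼 g : G, f (g • x) = 𝔼 y, f y := by
  have : Nonempty α := ⟨x⟩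
  have hconst (y : α) : 𝔼 g : G, f (g • y) = 𝔼 g : G, f (g • x) := by
    obtain ⟨h, rfl⟩ := MulAction.exists_smul_eq G x y
    exact expect_smul_smul f h x
  calc 𝔼 g : G, f (g • x)
      = 𝔼 y : α, 𝔼 g : G, f (g • y) := by simp_rw [hconst, Fintype.expect_const]
    _ = 𝔼 g : G, 𝔼 y : α, f (g • y) := expect_comm _ _ _
    _ = 𝔼 _g : G, 𝔼 y, f y :=
        expect_congr rfl fun g _ => Fintype.expect_equiv (MulAction.toPerm g) _ _ fun _ => rfl
    _ = 𝔼 y, f y := Fintype.expect_const _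

end Group

lemma expect_perm_apply_apply_eq {ι M : Type*} [Fintype ι] [DecidableEq ι] [AddCommMonoid M]
    [Module ℚ≥0 M] (f : ι → ι → M) {i j k l : ι} (hij : i ≠ j) (hkl : k ≠ l) :
    𝔼 π : Equiv.Perm ι, f (π i) (π j) = 𝔼 π : Equiv.Perm ι, f (π k) (π l) := by
  obtain ⟨σ, rfl, rfl⟩ := (MulAction.is_two_pretransitive_iff (G := Equiv.Perm ι)).mp
    (Equiv.Perm.isMultiplyPretransitive ι 2) hij hkl
  exact (expect_smul_smul (fun x : ι × ι => f x.1 x.2) σ (i, j)).symm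

section Variance

variable {ι 𝕜 : Type*} [Fintype ι] [Field 𝕜]

lemma sum_sub_expect [CharZero 𝕜] [Nonempty ι] (f : ι → 𝕜) :
    ∑ i, (f i - 𝔼 j, f j) = 0 := by
  rw [← Fintype.card_mul_expect, expect_sub_distrib, Fintype.expect_const, sub_self, mul_zero]

/-- The variance of `f` under the uniform distribution on the finite type `ι`. -/
def uniformVar [CharZero 𝕜] (f : ι → 𝕜) : 𝕜 := 𝔼 i, (f i - 𝔼 j, f j) ^ 2

lemma uniformVar_eq_sub [CharZero 𝕜] [Nonempty ι] (f : ι → 𝕜) :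
    uniformVar f = 𝔼 i, f i ^ 2 - (𝔼 i, f i) ^ 2 := by
  simp only [uniformVar, sub_sq, expect_add_distrib, expect_sub_distrib, ← expect_mul, ← mul_expect,
    Fintype.expect_const]
  ring

lemma uniformVar_nonneg [LinearOrder 𝕜] [IsStrictOrderedRing 𝕜] (f : ι → 𝕜) : 0 ≤ uniformVar f :=
  expect_nonneg fun _ _ => sq_nonneg _

lemma uniformVar_le_sq [LinearOrder 𝕜] [IsStrictOrderedRing 𝕜] [Nonempty ι] {f : ι → 𝕜} {A : 𝕜}
    (hf : ∀ i, |f i| ≤ A) : uniformVar f ≤ A ^ 2 :=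
  calc uniformVar f ≤ 𝔼 i, f i ^ 2 := by
        rw [uniformVar_eq_sub]
        exact sub_le_self _ (sq_nonneg _)
    _ ≤ A ^ 2 := expect_le univ_nonempty fun i _ => sq_le_sq.mpr ((hf i).trans (le_abs_self A))

end Variance

section LinearPermutationStatistic

variable {ι 𝕜 : Type*} [Fintype ι] [DecidableEq ι] [Field 𝕜]

/-- The linear permutation statistic `∑ᵢ aᵢ b_{π(i)}`, with weights `a` and scores `b`. -/
def linPermStat (a b : ι → 𝕜) (π : Equiv.Perm ι) : 𝕜 := ∑ i, a i * b (π i)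

section Moments

variable [CharZero 𝕜]

lemma expect_linPermStat (a b : ι → 𝕜) :
    𝔼 π, linPermStat a b π = (∑ i, a i) * 𝔼 j, b j := by
  simp only [linPermStat, expect_sum_comm, ← mul_expect, ← Equiv.Perm.smul_def,
    expect_smul_of_isPretransitive, ← sum_mul]

-- Since `b` sums to zero, the `n - 1` equal covariances of one row add up to minus its variance.
lemma card_sub_one_mul_expect_perm_apply_mul_apply {b : ι → 𝕜} (hb : ∑ i, b i = 0) (i j : ι) :
    ((Fintype.card ι : 𝕜) - 1) * 𝔼 π : Equiv.Perm ι, b (π i) * b (π j) =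
      (if i = j then ∑ k, b k ^ 2 else 0) - 𝔼 k, b k ^ 2 := by
  have hdiag : 𝔼 π : Equiv.Perm ι, b (π i) * b (π i) = 𝔼 k, b k ^ 2 := by
    simp only [← sq, ← Equiv.Perm.smul_def]
    exact expect_smul_of_isPretransitive (fun x => b x ^ 2) i
  split_ifs with hij
  · rw [← hij, hdiag, sub_mul, Fintype.card_mul_expect, one_mul]
  · have hrow : ∑ k, 𝔼 π : Equiv.Perm ι, b (π i) * b (π k) = 0 := by
      simp only [← expect_sum_comm, ← mul_sum, Equiv.sum_comp, hb, mul_zero, expect_const_zero]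
    have hoff : ∑ k ∈ univ.erase i, 𝔼 π : Equiv.Perm ι, b (π i) * b (π k) =
        ((Fintype.card ι : 𝕜) - 1) * 𝔼 π : Equiv.Perm ι, b (π i) * b (π j) := by
      rw [sum_congr rfl fun k hk =>
          expect_perm_apply_apply_eq (fun x y => b x * b y) (ne_of_mem_erase hk).symm hij,
        sum_const, nsmul_eq_mul, cast_card_erase_of_mem (mem_univ i), card_univ]
    rw [← add_sum_erase _ _ (mem_univ i), hdiag, hoff] at hrow
    linear_combination hrow

lemma card_sub_one_mul_expect_linPermStat_sq {a b : ι → 𝕜} (ha : ∑ i, a i = 0)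
    (hb : ∑ i, b i = 0) :
    ((Fintype.card ι : 𝕜) - 1) * 𝔼 π, linPermStat a b π ^ 2 =
      (∑ i, a i ^ 2) * ∑ i, b i ^ 2 :=
  calc ((Fintype.card ι : 𝕜) - 1) * 𝔼 π, linPermStat a b π ^ 2
      = ((Fintype.card ι : 𝕜) - 1) *
          𝔼 π : Equiv.Perm ι, ∑ i, ∑ j, a i * a j * (b (π i) * b (π j)) := by
        simp only [linPermStat, sq, sum_mul_sum, mul_mul_mul_comm (a _) (b _)]
    _ = ∑ i, ∑ j, a i * a j *
          (((Fintype.card ι : 𝕜) - 1) * 𝔼 π : Equiv.Perm ι, b (π i) * b (π j)) := by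
        simp only [expect_sum_comm, ← mul_expect, mul_sum,
          mul_left_comm ((Fintype.card ι : 𝕜) - 1)]
    _ = ∑ i, a i * (a i * ∑ k, b k ^ 2 - (∑ j, a j) * 𝔼 k, b k ^ 2) := by
        simp only [card_sub_one_mul_expect_perm_apply_mul_apply hb, mul_assoc, ← mul_sum, mul_sub,
          sum_sub_distrib, mul_ite, mul_zero, sum_ite_eq, mem_univ, if_true, sum_mul]
    _ = (∑ i, a i ^ 2) * ∑ i, b i ^ 2 := by
        simp only [ha, zero_mul, sub_zero, ← mul_assoc, ← sq, ← sum_mul]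

lemma linPermStat_sub_expect (a b : ι → 𝕜) (π : Equiv.Perm ι) :
    linPermStat a b π - 𝔼 σ, linPermStat a b σ =
      linPermStat (fun i => a i - 𝔼 j, a j) (fun i => b i - 𝔼 j, b j) π := by
  rcases isEmpty_or_nonempty ι with _ | _
  · simp [linPermStat]
  have hb : ∑ i, (b (π i) - 𝔼 j, b j) = 0 :=
    (Equiv.sum_comp π fun k => b k - 𝔼 j, b j).trans (sum_sub_expect b)
  calc linPermStat a b π - 𝔼 σ, linPermStat a b σ
      = ∑ i, a i * (b (π i) - 𝔼 j, b j) := by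
        rw [expect_linPermStat, linPermStat, sum_mul, ← sum_sub_distrib]
        simp only [mul_sub]
    _ = ∑ i, (a i - 𝔼 j, a j) * (b (π i) - 𝔼 j, b j) := by
        simp only [sub_mul (a _), sum_sub_distrib, ← mul_sum, hb, mul_zero, sub_zero]

lemma card_sub_one_mul_uniformVar_linPermStat (a b : ι → 𝕜) :
    ((Fintype.card ι : 𝕜) - 1) * uniformVar (linPermStat a b) =
      (Fintype.card ι : 𝕜) ^ 2 * (uniformVar a * uniformVar b) := by
  rcases isEmpty_or_nonempty ι with _ | _
  · simp [uniformVar, linPermStat]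
  have hcard (f : ι → 𝕜) : (Fintype.card ι : 𝕜) * uniformVar f = ∑ i, (f i - 𝔼 j, f j) ^ 2 :=
    Fintype.card_mul_expect _
  rw [sq, mul_mul_mul_comm, hcard, hcard,
    ← card_sub_one_mul_expect_linPermStat_sq (sum_sub_expect a) (sum_sub_expect b)]
  simp only [uniformVar, linPermStat_sub_expect]

end Moments

lemma uniformVar_linPermStat_le [LinearOrder 𝕜] [IsStrictOrderedRing 𝕜] [Nontrivial ι]
    {a b : ι → 𝕜} {A B : 𝕜} (ha : ∀ i, |a i| ≤ A) (hb : ∀ i, |b i| ≤ B) :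
    uniformVar (linPermStat a b) ≤ 2 * Fintype.card ι * (A ^ 2 * B ^ 2) := by
  set n : 𝕜 := (Fintype.card ι : 𝕜)
  have hn : 2 ≤ n := Nat.ofNat_le_cast.mpr Fintype.one_lt_card
  refine le_of_mul_le_mul_left ?_ (by linarith : 0 < n - 1)
  calc (n - 1) * uniformVar (linPermStat a b)
      = n ^ 2 * (uniformVar a * uniformVar b) := card_sub_one_mul_uniformVar_linPermStat a b
    _ ≤ n ^ 2 * (A ^ 2 * B ^ 2) := by
        gcongr
        · exact uniformVar_nonneg b
        · exact uniformVar_le_sq ha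
        · exact uniformVar_le_sq hb
    _ ≤ (2 * (n - 1) * n) * (A ^ 2 * B ^ 2) := by
        gcongr
        nlinarith
    _ = (n - 1) * (2 * n * (A ^ 2 * B ^ 2)) := by ring

end LinearPermutationStatistic

section Kernel

variable {K : ℝ → ℝ}

lemma abs_kbar_le (hK : Integrable K) (x : ℝ) : |kbar K x| ≤ ∫ t, |K t| :=
  abs_integral_le_integral_abs.trans
    (setIntegral_le_integral hK.abs (Eventually.of_forall fun _ => abs_nonneg _))

lemma abs_BCoef_le (hK : Integrable K) (n : ℕ) (h : ℝ) (i j : ℕ) :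
    |BCoef K n h i j| ≤ (∫ t, |K t|) ^ 2 := by
  have hbound (v : ℝ) :
      ‖kbar K ((v - i / n) / h) * kbar K ((v - j / n) / h)‖ ≤ (∫ t, |K t|) ^ 2 := by
    rw [norm_mul, sq]
    exact mul_le_mul (abs_kbar_le hK _) (abs_kbar_le hK _) (abs_nonneg _) (by positivity)
  simpa [BCoef] using intervalIntegral.norm_integral_le_of_norm_le_const (a := 0) (b := 1)
    fun v _ => hbound v

lemma aCoef_self (K : ℝ → ℝ) (n : ℕ) (h : ℝ) (i : ℕ) :
    aCoef K n h i i = (1 / h) * ∫ u in (0:ℝ)..1, K ((u - i / n) / h) ^ 2 := by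
  simp only [aCoef, sq]

lemma BCoef_self (K : ℝ → ℝ) (n : ℕ) (h : ℝ) (i : ℕ) :
    BCoef K n h i i = ∫ v in (0:ℝ)..1, kbar K ((v - i / n) / h) ^ 2 := by
  simp only [BCoef, sq]

lemma abs_aCoef_self_le (hK : Integrable fun x => K x ^ 2) (n : ℕ) (h : ℝ) (i : ℕ) :
    |aCoef K n h i i| ≤ ∫ x, K x ^ 2 := by
  rw [aCoef_self, one_div, ← smul_eq_mul, ← Real.norm_eq_abs]
  simp only [sub_div]
  rw [intervalIntegral.inv_smul_integral_comp_div_sub (fun x => K x ^ 2)]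
  calc ‖∫ x in (0 / h - i / n / h)..(1 / h - i / n / h), K x ^ 2‖
      ≤ ∫ x in Set.uIoc (0 / h - i / n / h) (1 / h - i / n / h), ‖K x ^ 2‖ :=
        intervalIntegral.norm_integral_le_integral_norm_uIoc
    _ ≤ ∫ x, ‖K x ^ 2‖ :=
        setIntegral_le_integral hK.norm (Eventually.of_forall fun _ => norm_nonneg _)
    _ = ∫ x, K x ^ 2 := by simp only [Real.norm_eq_abs, abs_sq]

end Kernel

lemma permE_eq_expect (n : ℕ) (f : Equiv.Perm (Fin n) → ℝ) : permE n f = 𝔼 π, f π := by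
  rw [permE, Fintype.expect_eq_sum_div_card, Fintype.card_perm, Fintype.card_fin]

lemma sum_Icc_one_eq_sum_fin {M : Type*} [AddCommMonoid M] (g : ℕ → M) (n : ℕ) :
    ∑ i ∈ Icc 1 n, g i = ∑ i : Fin n, g (i + 1) := by
  rw [Fin.sum_univ_eq_sum_range (fun i => g (i + 1)), range_eq_Ico, sum_Ico_add' g 0 n 1]
  rfl

/-- The statistic `b_{n0}` as a linear permutation statistic: the factor `1/(n²h₁)` is absorbed
into the weights, and `i : Fin n` stands for the index `i + 1` of the paper. -/
noncomputable def diagStat (K : ℝ → ℝ) (n : ℕ) (h₁ h₂ : ℝ) : Equiv.Perm (Fin n) → ℝ :=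
  linPermStat (fun i => 1 / ((n : ℝ) ^ 2 * h₁) * aCoef K n h₁ ((i : ℕ) + 1) ((i : ℕ) + 1))
    fun i => BCoef K n h₂ ((i : ℕ) + 1) ((i : ℕ) + 1)

lemma permE_diagStat (K : ℝ → ℝ) (n : ℕ) (h₁ h₂ : ℝ) :
    permE n (diagStat K n h₁ h₂) =
      (1 / ((n : ℝ) ^ 2 * h₁ ^ 2)) *
        (∑ i ∈ Icc 1 n, ∫ u in (0:ℝ)..1, K ((u - i / n) / h₁) ^ 2) *
        ((1 / (n : ℝ)) * ∑ i ∈ Icc 1 n, ∫ v in (0:ℝ)..1, kbar K ((v - i / n) / h₂) ^ 2) := by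
  rw [permE_eq_expect, diagStat, expect_linPermStat, sum_Icc_one_eq_sum_fin,
    sum_Icc_one_eq_sum_fin, Fintype.expect_eq_sum_div_card, Fintype.card_fin]
  simp only [aCoef_self, BCoef_self, ← mul_sum]
  ring

lemma uniformVar_diagStat_le {K : ℝ → ℝ} (hK : Integrable K) (hK2 : MemLp K 2) {n : ℕ}
    (hn : 2 ≤ n) {h₁ : ℝ} (hh₁ : 0 < h₁) (h₂ : ℝ) :
    uniformVar (diagStat K n h₁ h₂) ≤
      2 * (∫ x, K x ^ 2) ^ 2 * (∫ x, |K x|) ^ 4 / ((n : ℝ) ^ 3 * h₁ ^ 2) := by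
  have : Nontrivial (Fin n) := Fin.nontrivial_iff_two_le.mpr hn
  have hweight (i : Fin n) :
      |1 / ((n : ℝ) ^ 2 * h₁) * aCoef K n h₁ ((i : ℕ) + 1) ((i : ℕ) + 1)| ≤
        1 / ((n : ℝ) ^ 2 * h₁) * ∫ x, K x ^ 2 := by
    rw [abs_mul, abs_of_nonneg (by positivity : 0 ≤ 1 / ((n : ℝ) ^ 2 * h₁))]
    gcongr
    exact abs_aCoef_self_le hK2.integrable_sq n h₁ _
  have hvar := uniformVar_linPermStat_le hweight
    fun i : Fin n => abs_BCoef_le hK n h₂ ((i : ℕ) + 1) ((i : ℕ) + 1)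
  refine hvar.trans_eq ?_
  rw [Fintype.card_fin]
  field_simp

theorem stmt14_general (K : ℝ → ℝ) (hK : Integrable K) (hK2 : MemLp K 2)
    (b0 : ∀ n : ℕ, ℝ → ℝ → Equiv.Perm (Fin n) → ℝ)
    (hb0 : ∀ n h₁ h₂ π, b0 n h₁ h₂ π = (1 / ((n : ℝ) ^ 2 * h₁)) *
      ∑ i : Fin n, aCoef K n h₁ ((i : ℕ) + 1) ((i : ℕ) + 1) *
        BCoef K n h₂ ((π i : ℕ) + 1) ((π i : ℕ) + 1)) :
    (∀ n : ℕ, ∀ h₁ h₂ : ℝ, 0 < h₁ → 0 < h₂ →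
      permE n (b0 n h₁ h₂) =
        (1 / ((n : ℝ) ^ 2 * h₁ ^ 2)) *
          (∑ i ∈ Finset.Icc 1 n, ∫ u in (0:ℝ)..1, K ((u - i / n) / h₁) ^ 2) *
          ((1 / (n : ℝ)) * ∑ i ∈ Finset.Icc 1 n, ∫ v in (0:ℝ)..1, kbar K ((v - i / n) / h₂) ^ 2)) ∧
    (∃ c > 0, ∀ n : ℕ, 2 ≤ n → ∀ h₁ h₂ : ℝ, 0 < h₁ → 0 < h₂ →
      permE n (fun π => (b0 n h₁ h₂ π) ^ 2) - (permE n (b0 n h₁ h₂)) ^ 2 ≤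
        c / ((n : ℝ) ^ 3 * h₁ ^ 2)) := by
  have hstat (n : ℕ) (h₁ h₂ : ℝ) : b0 n h₁ h₂ = diagStat K n h₁ h₂ := by
    funext π
    simp only [hb0, diagStat, linPermStat, mul_sum, mul_assoc]
  simp only [hstat]
  refine ⟨fun n h₁ h₂ _ _ => permE_diagStat K n h₁ h₂,
    2 * (∫ x, K x ^ 2) ^ 2 * (∫ x, |K x|) ^ 4 + 1, by positivity, fun n hn h₁ h₂ hh₁ _ => ?_⟩
  rw [permE_eq_expect, permE_eq_expect, ← uniformVar_eq_sub]
  refine (uniformVar_diagStat_le hK hK2 hn hh₁ h₂).trans ?_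
  gcongr
  exact le_add_of_nonneg_right zero_le_one

/-- for `b_{n0} = (1/(n²h₁)) ∑ᵢ a_{ii} B_{π(i)π(i)}` with a uniform random
permutation `π`, the expectation equals
`(1/(n²h₁²)) (∑ᵢ ∫₀¹ K²((u-i/n)/h₁) du)((1/n) ∑ᵢ ∫₀¹ K̄²((v-i/n)/h₂) dv)`, and
`Var(b_{n0}) ≤ c/(n³h₁²)` for all `n ≥ 2` and `h₁, h₂ ∈ (0,1)`, where `c > 0` depends
only on `K`. -/
theorem stmt14 (K : ℝ → ℝ)
    (hKcont : Continuous K) (hKsymm : ∀ x, K (-x) = K x)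
    (hKnonneg : ∀ x, 0 ≤ K x) (hKint : ∫ x, K x = 1)
    (hKsupp : ∀ x, x ∉ Set.Icc (-1 : ℝ) 1 → K x = 0)
    (b0 : ∀ n : ℕ, ℝ → ℝ → Equiv.Perm (Fin n) → ℝ)
    (hb0 : ∀ n h₁ h₂ π, b0 n h₁ h₂ π = (1 / ((n : ℝ) ^ 2 * h₁)) *
      ∑ i : Fin n, aCoef K n h₁ ((i : ℕ) + 1) ((i : ℕ) + 1) *
        BCoef K n h₂ ((π i : ℕ) + 1) ((π i : ℕ) + 1)) :
    (∀ n : ℕ, ∀ h₁ h₂ : ℝ, 0 < h₁ → 0 < h₂ →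
      permE n (b0 n h₁ h₂) =
        (1 / ((n : ℝ) ^ 2 * h₁ ^ 2)) *
          (∑ i ∈ Finset.Icc 1 n, ∫ u in (0:ℝ)..1, K ((u - i / n) / h₁) ^ 2) *
          ((1 / (n : ℝ)) * ∑ i ∈ Finset.Icc 1 n, ∫ v in (0:ℝ)..1, kbar K ((v - i / n) / h₂) ^ 2)) ∧
    (∃ c > 0, ∀ n : ℕ, 2 ≤ n → ∀ h₁ ∈ Set.Ioo (0:ℝ) 1, ∀ h₂ ∈ Set.Ioo (0:ℝ) 1,
      permE n (fun π => (b0 n h₁ h₂ π) ^ 2) - (permE n (b0 n h₁ h₂)) ^ 2 ≤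
        c / ((n : ℝ) ^ 3 * h₁ ^ 2)) := by
  have hsupp : HasCompactSupport K := .intro isCompact_Icc hKsupp
  obtain ⟨hmean, c, hc, hvar⟩ := stmt14_general K (hKcont.integrable_of_hasCompactSupport hsupp)
    (hKcont.memLp_of_hasCompactSupport hsupp) b0 hb0
  exact ⟨hmean, c, hc, fun n hn h₁ hh₁ h₂ hh₂ => hvar n hn h₁ h₂ hh₁.1 hh₂.1⟩
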